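/- (Predictive-variance lower bound at the test input.) The Gaussian-process predictive variance at the test input satisfies σ²(w') ≥ τ² (1 − m · exp(−2 d_min(w')²) / λ_min(K)). -/

import Mathlib

open Matrix Real

/-!
In the Loewner order a positive definite `K` satisfies `K⁻¹ ≤ λ_min(K)⁻¹ • 1`, so
`φᵀ K⁻¹ φ ≤ ‖φ‖² / λ_min(K)`. Each of the `m` entries of `φ(w')` is `exp (-d²)` for a distance `d`
from `w'` to a training input, hence is at most `exp (-d_min²)`, and
`‖φ(w')‖² ≤ m * exp (-2 d_min²)`.
-/

section QuadraticForm

open scoped MatrixOrder ComplexOrder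

variable {𝕜 ι : Type*} [RCLike 𝕜] [Fintype ι]

lemma re_star_dotProduct_self (x : ι → 𝕜) : RCLike.re (star x ⬝ᵥ x) = ∑ i, ‖x i‖ ^ 2 := by
  simp only [dotProduct, Pi.star_apply, RCLike.star_def, RCLike.conj_mul, map_sum]
  norm_cast

variable [DecidableEq ι] {A : Matrix ι ι 𝕜}

lemma re_dotProduct_mulVec_le_of_spectrum_le (hA : A.IsHermitian) {c : ℝ}
    (hc : ∀ r ∈ spectrum ℝ A, r ≤ c) (x : ι → 𝕜) :
    RCLike.re (star x ⬝ᵥ (A *ᵥ x)) ≤ c * ∑ i, ‖x i‖ ^ 2 := by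
  have loewner_le : A ≤ algebraMap ℝ (Matrix ι ι 𝕜) c :=
    le_algebraMap_of_spectrum_le hc hA.isSelfAdjoint
  have form_nonneg := (Matrix.le_iff.mp loewner_le).re_dotProduct_nonneg x
  rw [Algebra.algebraMap_eq_smul_one, sub_mulVec, smul_mulVec, one_mulVec, dotProduct_sub,
    dotProduct_smul, map_sub, RCLike.smul_re, re_star_dotProduct_self] at form_nonneg
  exact sub_nonneg.mp form_nonneg

lemma iInf_eigenvalues_pos [Nonempty ι] (hA : A.PosDef) : 0 < ⨅ i, hA.1.eigenvalues i := by
  obtain ⟨i, hi⟩ := exists_eq_ciInf_of_finite (f := hA.1.eigenvalues)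
  exact hi ▸ hA.eigenvalues_pos i

lemma le_inv_iInf_eigenvalues_of_mem_spectrum_inv (hA : A.PosDef) {r : ℝ}
    (hr : r ∈ spectrum ℝ A⁻¹) : r ≤ (⨅ i, hA.1.eigenvalues i)⁻¹ := by
  have inv_mem : r⁻¹ ∈ spectrum ℝ A := by
    obtain ⟨u, rfl⟩ := hA.isUnit
    rwa [← Matrix.coe_units_inv, ← spectrum.inv₀_mem_iff] at hr
  rw [hA.1.spectrum_real_eq_range_eigenvalues] at inv_mem
  obtain ⟨i, hi⟩ := inv_mem
  have : Nonempty ι := ⟨i⟩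
  rw [← inv_inv r, ← hi]
  exact inv_anti₀ (iInf_eigenvalues_pos hA) (ciInf_le (Set.finite_range _).bddBelow i)

lemma re_dotProduct_inv_mulVec_le (hA : A.PosDef) (x : ι → 𝕜) :
    RCLike.re (star x ⬝ᵥ (A⁻¹ *ᵥ x)) ≤ (∑ i, ‖x i‖ ^ 2) / ⨅ i, hA.1.eigenvalues i := by
  rw [div_eq_inv_mul]
  exact re_dotProduct_mulVec_le_of_spectrum_le hA.inv.1
    (fun _ => le_inv_iInf_eigenvalues_of_mem_spectrum_inv hA) x

lemma re_dotProduct_inv_mulVec_le_of_norm_le (hA : A.PosDef) {x : ι → 𝕜} {b : ℝ}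
    (hx : ∀ i, ‖x i‖ ≤ b) :
    RCLike.re (star x ⬝ᵥ (A⁻¹ *ᵥ x)) ≤
      Fintype.card ι * b ^ 2 / ⨅ i, hA.1.eigenvalues i := by
  have sum_le : ∑ i, ‖x i‖ ^ 2 ≤ Fintype.card ι * b ^ 2 := by
    simpa only [nsmul_eq_mul, Finset.card_univ] using
      Finset.sum_le_card_nsmul Finset.univ (fun i => ‖x i‖ ^ 2) (b ^ 2)
        fun i _ => pow_le_pow_left₀ (norm_nonneg _) (hx i) 2
  exact (re_dotProduct_inv_mulVec_le hA x).trans <| div_le_div_of_nonneg_right sum_le <|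
    Real.iInf_nonneg fun i => (hA.eigenvalues_pos i).le

end QuadraticForm

section SqExpKernel

variable {ι : Type*} [Fintype ι]

/-- The squared distance `d(x, y)²` with lengthscales `θ`. It is kept squared so that the kernel
needs no square root; a coordinate with `θ l = 0` contributes nothing. -/
noncomputable def scaledSqDist (θ x y : ι → ℝ) : ℝ :=
  ∑ l, (x l - y l) ^ 2 / θ l ^ 2

/-- The squared exponential kernel `Φ(x, y) = exp (-d(x, y)²)` with lengthscales `θ`. -/
noncomputable def sqExpKernel (θ x y : ι → ℝ) : ℝ :=
  exp (-scaledSqDist θ x y)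

lemma scaledSqDist_nonneg (θ x y : ι → ℝ) : 0 ≤ scaledSqDist θ x y :=
  Finset.sum_nonneg fun _ _ => by positivity

lemma scaledSqDist_comm (θ x y : ι → ℝ) : scaledSqDist θ x y = scaledSqDist θ y x := by
  simp only [scaledSqDist, sub_sq_comm]

lemma sqExpKernel_le_exp_neg_sq (θ x y : ι → ℝ) {d : ℝ} (hd : 0 ≤ d)
    (hdist : d ≤ √(scaledSqDist θ x y)) : sqExpKernel θ x y ≤ exp (-d ^ 2) :=
  exp_le_exp.mpr <| neg_le_neg <| (le_sqrt hd (scaledSqDist_nonneg θ x y)).mp hdist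

end SqExpKernel

/-- **Predictive-variance lower bound at the test input.**
`σ²(w') ≥ τ² (1 − m · exp(−2 d_min(w')²) / λ_min(K))`. -/
theorem gp_predictive_variance_lower_bound_test
    (p m : ℕ) (hp : 1 ≤ p) (hm : 1 ≤ m)
    (θ : Fin p → ℝ) (hθ : ∀ j, 0 < θ j)
    (τ2 : ℝ) (hτ2 : 0 < τ2)
    (w : Fin m → Fin p → ℝ)
    (K : Matrix (Fin m) (Fin m) ℝ)
    (hK : ∀ i j, K i j = Real.exp (-(∑ l, (w i l - w j l) ^ 2 / (θ l) ^ 2)))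
    (hKpd : K.PosDef)
    (z : Fin m → ℝ)
    (φ : (Fin p → ℝ) → Fin m → ℝ)
    (hφ : ∀ x i, φ x i = Real.exp (-(∑ l, (x l - w i l) ^ 2 / (θ l) ^ 2)))
    (σ2 : (Fin p → ℝ) → ℝ)
    (hσ2 : ∀ x, σ2 x = τ2 * (1 - φ x ⬝ᵥ (K⁻¹ *ᵥ φ x)))
    (lamMin : ℝ)
    (hlam : lamMin = ⨅ i, hKpd.1.eigenvalues i)
    (n : ℕ) (hn : 1 ≤ n)
    (v : Fin n → Fin p → ℝ)
    (w' : Fin p → ℝ)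
    (dmin : ℝ)
    (hdmin : dmin = min
      (⨅ i, Real.sqrt (∑ l, (w i l - w' l) ^ 2 / (θ l) ^ 2))
      (⨅ j, Real.sqrt (∑ l, (v j l - w' l) ^ 2 / (θ l) ^ 2))) :
    σ2 w' ≥ τ2 * (1 - (m : ℝ) * Real.exp (-2 * dmin ^ 2) / lamMin) := by
  have dmin_nonneg : 0 ≤ dmin := hdmin ▸ le_min
    (Real.iInf_nonneg fun _ => sqrt_nonneg _) (Real.iInf_nonneg fun _ => sqrt_nonneg _)
  have dmin_le (i : Fin m) : dmin ≤ √(scaledSqDist θ w' (w i)) := by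
    rw [hdmin, scaledSqDist_comm]
    exact (min_le_left _ _).trans (ciInf_le (Set.finite_range _).bddBelow i)
  have norm_φ_le (i : Fin m) : ‖φ w' i‖ ≤ exp (-dmin ^ 2) := by
    rw [hφ, norm_of_nonneg (exp_nonneg _)]
    exact sqExpKernel_le_exp_neg_sq θ w' (w i) dmin_nonneg (dmin_le i)
  have exp_sq : exp (-dmin ^ 2) ^ 2 = exp (-2 * dmin ^ 2) := by
    rw [← exp_nat_mul]
    ring_nf
  have form_le : φ w' ⬝ᵥ (K⁻¹ *ᵥ φ w') ≤ m * exp (-2 * dmin ^ 2) / lamMin := by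
    simpa only [RCLike.re_to_real, star_trivial, Fintype.card_fin, exp_sq, ← hlam] using
      re_dotProduct_inv_mulVec_le_of_norm_le hKpd norm_φ_le
  rw [hσ2]
  exact mul_le_mul_of_nonneg_left (sub_le_sub_left form_le 1) hτ2.le
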